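/- arXiv:1802.05811 — 4 statements merged into one kernel-verified Lean document; each statement's English description precedes it below -/
import Mathlib

section
/- Suppose D is a probability distribution over convex L-smooth functions f : ℝ^d → ℝ, let F(w) = E_{f∼D}[f(w)], and let w* ∈ argmin F (over all of ℝ^d, so ∇F(w*) = 0). Then for every x ∈ ℝ^d, E_{f∼D}[‖∇f(x) − ∇f(w*)‖²] ≤ 2L (F(x) − F(w*)). -/
open MeasureTheory

open scoped Topology

/-! The pointwise ingredient is co-coercivity: if `f` is convex with `L`-Lipschitz gradient, compare
`f` at `x - L⁻¹ • (∇f x - ∇f w)` with its quadratic upper bound at `x` and its tangent plane at `w`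
to get `‖∇f x - ∇f w‖² ≤ 2L (f x - f w - ⟪∇f w, x - w⟫)`. Integrating, the inner product disappears
because its integral is the derivative at the minimizer `w` of `F` in the direction `x - w`.
Differentiating `F` under the integral needs no domination hypothesis: the difference quotients of
a convex function are monotone, so they are controlled by those at `±1`. -/

section ConvexOn

variable {E : Type*} [AddCommGroup E] [Module ℝ E] {s : Set E} {f : E → ℝ} {x v : E}

theorem add_le_of_convexOn_of_hasLineDerivAt {f' : ℝ} (hf : ConvexOn ℝ s f)
    (hx : x ∈ s) (hxv : x + v ∈ s) (hf' : HasLineDerivAt ℝ f f' x v) :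
    f x + f' ≤ f (x + v) := by
  have hline : ∀ t : ℝ, AffineMap.lineMap x (x + v) t = x + t • v := fun t ↦ by
    simp [AffineMap.lineMap_apply, add_comm]
  have hφ := hf.comp_affineMap (AffineMap.lineMap (k := ℝ) x (x + v))
  have hslope := hφ.le_slope_of_hasDerivAt (x := 0) (y := 1) (f' := f') (by simpa) (by simpa)
    zero_lt_one (by simpa only [HasLineDerivAt, Function.comp_def, hline] using hf')
  simp only [slope_def_field, Function.comp_apply, hline, one_smul, zero_smul, add_zero, sub_zero,
    div_one] at hslope
  linarith

theorem sub_le_mul_sub_of_convexOn (hf : ConvexOn ℝ s f) (hx : x ∈ s) (hxv : x + v ∈ s) {t : ℝ}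
    (ht₀ : 0 ≤ t) (ht₁ : t ≤ 1) : f (x + t • v) - f x ≤ t * (f (x + v) - f x) := by
  have hcomb : x + t • v = (1 - t) • x + t • (x + v) := by module
  have h := hf.2 hx hxv (sub_nonneg.2 ht₁) ht₀ (by ring)
  rw [← hcomb, smul_eq_mul, smul_eq_mul] at h
  linarith

theorem two_mul_le_add_of_convexOn (hf : ConvexOn ℝ s f) (hxv : x + v ∈ s) (hxv' : x - v ∈ s) :
    2 * f x ≤ f (x + v) + f (x - v) := by
  have hmid : x = (1 / 2 : ℝ) • (x + v) + (1 / 2 : ℝ) • (x - v) := by module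
  have h := hf.2 hxv hxv' one_half_pos.le one_half_pos.le (add_halves (1 : ℝ))
  rw [← hmid, smul_eq_mul, smul_eq_mul] at h
  linarith

theorem abs_sub_le_abs_mul_max_of_convexOn (hf : ConvexOn ℝ s f) (hx : x ∈ s) (hxv : x + v ∈ s)
    (hxv' : x - v ∈ s) {t : ℝ} (ht : |t| ≤ 1) :
    |f (x + t • v) - f x| ≤ |t| * max (f (x + v) - f x) (f (x - v) - f x) := by
  wlog ht₀ : 0 ≤ t generalizing t v
  · simpa [max_comm, ← sub_eq_add_neg] using this (v := -v) (t := -t)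
      (by rwa [← sub_eq_add_neg]) (by rwa [sub_neg_eq_add]) (by rwa [abs_neg]) (by linarith)
  rw [abs_of_nonneg ht₀] at ht ⊢
  rw [sub_eq_add_neg] at hxv'
  have hright := sub_le_mul_sub_of_convexOn hf hx hxv ht₀ ht
  have hleft := sub_le_mul_sub_of_convexOn hf hx hxv' ht₀ ht
  have hmid := two_mul_le_add_of_convexOn hf (hf.1.add_smul_mem hx hxv ⟨ht₀, ht⟩)
    (by simpa [sub_eq_add_neg] using hf.1.add_smul_mem hx hxv' ⟨ht₀, ht⟩)
  rw [smul_neg, ← sub_eq_add_neg, ← sub_eq_add_neg] at hleft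
  rw [mul_max_of_nonneg _ _ ht₀, abs_le', neg_sub]
  exact ⟨hright.trans (le_max_left _ _), le_max_of_le_right (by linarith)⟩

theorem eventually_forall_norm_slope_le_of_convexOn {ι : Type*} {f : ι → E → ℝ}
    (hf : ∀ i, ConvexOn ℝ s (f i)) (hx : x ∈ s) (hxv : x + v ∈ s) (hxv' : x - v ∈ s) :
    ∀ᶠ t : ℝ in 𝓝[≠] 0, ∀ i,
      ‖t⁻¹ • (f i (x + t • v) - f i x)‖ ≤ max (f i (x + v) - f i x) (f i (x - v) - f i x) := by
  filter_upwards [self_mem_nhdsWithin,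
    mem_nhdsWithin_of_mem_nhds (Metric.closedBall_mem_nhds 0 one_pos)] with t ht₀ ht₁ i
  rw [norm_smul, norm_inv, Real.norm_eq_abs, inv_mul_le_iff₀ (abs_pos.2 ht₀)]
  exact abs_sub_le_abs_mul_max_of_convexOn (hf i) hx hxv hxv' (by simpa using ht₁)

end ConvexOn

section LineDerivIntegral

variable {E : Type*} [AddCommGroup E] [Module ℝ E] {x v : E}
  {Ω : Type*} [MeasurableSpace Ω] {μ : Measure Ω} {f : Ω → E → ℝ} {f' : Ω → ℝ}

theorem aestronglyMeasurable_of_hasLineDerivAt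
    (hmeas : ∀ y, AEStronglyMeasurable (fun ω ↦ f ω y) μ)
    (hf' : ∀ ω, HasLineDerivAt ℝ (f ω) (f' ω) x v) : AEStronglyMeasurable f' μ :=
  aestronglyMeasurable_of_tendsto_ae (𝓝[≠] (0 : ℝ))
    (fun t ↦ ((hmeas (x + t • v)).sub (hmeas x)).const_smul t⁻¹)
    (ae_of_all μ fun ω ↦ (hf' ω).tendsto_slope_zero)

theorem integrable_of_convexOn_of_hasLineDerivAt (hconv : ∀ ω, ConvexOn ℝ Set.univ (f ω))
    (hint : ∀ y, Integrable (fun ω ↦ f ω y) μ) (hf' : ∀ ω, HasLineDerivAt ℝ (f ω) (f' ω) x v) :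
    Integrable f' μ :=
  (((hint (x + v)).sub (hint x)).sup ((hint (x - v)).sub (hint x))).mono'
    (aestronglyMeasurable_of_hasLineDerivAt (fun y ↦ (hint y).aestronglyMeasurable) hf')
    (ae_of_all μ fun ω ↦ le_of_tendsto (hf' ω).tendsto_slope_zero.norm
      ((eventually_forall_norm_slope_le_of_convexOn hconv trivial trivial trivial).mono
        fun _ ht ↦ ht ω))

theorem hasLineDerivAt_integral_of_convexOn (hconv : ∀ ω, ConvexOn ℝ Set.univ (f ω))
    (hint : ∀ y, Integrable (fun ω ↦ f ω y) μ) (hf' : ∀ ω, HasLineDerivAt ℝ (f ω) (f' ω) x v) :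
    HasLineDerivAt ℝ (fun y ↦ ∫ ω, f ω y ∂μ) (∫ ω, f' ω ∂μ) x v := by
  have hslope_integral : ∀ t : ℝ, t⁻¹ • (∫ ω, f ω (x + t • v) ∂μ - ∫ ω, f ω x ∂μ) =
      ∫ ω, t⁻¹ • (f ω (x + t • v) - f ω x) ∂μ := fun t ↦ by
    rw [integral_smul, integral_sub (hint _) (hint _)]
  rw [hasLineDerivAt_iff_tendsto_slope_zero]
  simp only [hslope_integral]
  refine tendsto_integral_filter_of_dominated_convergence _ ?_ ?_
    (((hint (x + v)).sub (hint x)).sup ((hint (x - v)).sub (hint x)))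
    (ae_of_all μ fun ω ↦ (hf' ω).tendsto_slope_zero)
  · exact .of_forall fun t ↦ (((hint _).sub (hint _)).smul t⁻¹).aestronglyMeasurable
  · exact (eventually_forall_norm_slope_le_of_convexOn hconv trivial trivial trivial).mono
      fun _ ht ↦ ae_of_all μ ht

end LineDerivIntegral

section Gradient

open scoped RealInnerProductSpace

variable {E : Type*} [NormedAddCommGroup E] [InnerProductSpace ℝ E] [CompleteSpace E]

theorem hasDerivAt_comp_add_smul_of_hasGradientAt {f : E → ℝ} {g x v : E} {t : ℝ}
    (hg : HasGradientAt f g (x + t • v)) :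
    HasDerivAt (fun s : ℝ ↦ f (x + s • v)) ⟪g, v⟫ t := by
  have hline : HasDerivAt (fun s : ℝ ↦ x + s • v) v t := by
    simpa using ((hasDerivAt_id t).smul_const v).const_add x
  simpa using! hg.hasFDerivAt.comp_hasDerivAt t hline

theorem hasLineDerivAt_of_hasGradientAt {f : E → ℝ} {g x : E} (hg : HasGradientAt f g x) (v : E) :
    HasLineDerivAt ℝ f ⟪g, v⟫ x v :=
  hasDerivAt_comp_add_smul_of_hasGradientAt (by simpa using hg)

variable {f : E → ℝ} {g : E → E} {L : ℝ} {x : E}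

theorem le_add_inner_add_of_lipschitz_gradient (hg : ∀ y, HasGradientAt f (g y) y)
    (hlip : ∀ y, ‖g y - g x‖ ≤ L * ‖y - x‖) (v : E) :
    f (x + v) ≤ f x + ⟪g x, v⟫ + L / 2 * ‖v‖ ^ 2 := by
  have hφ : ∀ t : ℝ, HasDerivAt (fun s : ℝ ↦ f (x + s • v)) ⟪g (x + t • v), v⟫ t :=
    fun t ↦ hasDerivAt_comp_add_smul_of_hasGradientAt (hg _)
  have hB : ∀ t : ℝ, HasDerivAt (fun s : ℝ ↦ f x + s * ⟪g x, v⟫ + s ^ 2 * (L / 2 * ‖v‖ ^ 2))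
      (⟪g x, v⟫ + t * (L * ‖v‖ ^ 2)) t := fun t ↦ by
    convert! (((hasDerivAt_id t).mul_const ⟪g x, v⟫).const_add (f x)).add
      ((hasDerivAt_pow 2 t).mul_const (L / 2 * ‖v‖ ^ 2)) using 1
    push_cast
    ring
  have hφB : ∀ t ∈ Set.Ico (0 : ℝ) 1, ⟪g (x + t • v), v⟫ ≤ ⟪g x, v⟫ + t * (L * ‖v‖ ^ 2) :=
    fun t ht ↦ calc
      ⟪g (x + t • v), v⟫ = ⟪g x, v⟫ + ⟪g (x + t • v) - g x, v⟫ := by rw [inner_sub_left]; ring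
      _ ≤ ⟪g x, v⟫ + ‖g (x + t • v) - g x‖ * ‖v‖ := by gcongr; exact real_inner_le_norm _ _
      _ ≤ ⟪g x, v⟫ + L * ‖x + t • v - x‖ * ‖v‖ := by gcongr; exact hlip _
      _ = ⟪g x, v⟫ + t * (L * ‖v‖ ^ 2) := by
        rw [add_sub_cancel_left, norm_smul, Real.norm_of_nonneg ht.1]; ring
  have h := image_le_of_deriv_right_le_deriv_boundary
    (fun t _ ↦ (hφ t).continuousAt.continuousWithinAt) (fun t _ ↦ (hφ t).hasDerivWithinAt)
    (by simp) (fun t _ ↦ (hB t).continuousAt.continuousWithinAt)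
    (fun t _ ↦ (hB t).hasDerivWithinAt) hφB (Set.right_mem_Icc.2 zero_le_one)
  simpa using h

theorem norm_gradient_sub_sq_le_of_convexOn (hL : 0 ≤ L) (hf : ConvexOn ℝ Set.univ f)
    (hg : ∀ y, HasGradientAt f (g y) y) (hlip : ∀ y, ‖g y - g x‖ ≤ L * ‖y - x‖) (w : E) :
    ‖g x - g w‖ ^ 2 ≤ 2 * L * (f x - f w - ⟪g w, x - w⟫) := by
  rcases hL.eq_or_lt with rfl | hL
  · have hxw : g w - g x = 0 := by simpa using hlip w
    simp [← neg_sub (g w) (g x), hxw]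
  set δ := g x - g w
  have hupper := le_add_inner_add_of_lipschitz_gradient hg hlip (-(L⁻¹ • δ))
  have hlower := add_le_of_convexOn_of_hasLineDerivAt hf (Set.mem_univ w) (Set.mem_univ _)
    (hasLineDerivAt_of_hasGradientAt (hg w) (x + -(L⁻¹ • δ) - w))
  have hδ_inner : ⟪g x, δ⟫ - ⟪g w, δ⟫ = ‖δ‖ ^ 2 := by
    rw [← inner_sub_left, real_inner_self_eq_norm_sq]
  have hkey : L⁻¹ * ‖δ‖ ^ 2 - L / 2 * (L⁻¹ * ‖δ‖) ^ 2 ≤ f x - f w - ⟪g w, x - w⟫ := by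
    rw [add_sub_cancel, add_sub_right_comm, inner_add_right, inner_neg_right,
      real_inner_smul_right] at hlower
    rw [inner_neg_right, real_inner_smul_right, norm_neg, norm_smul,
      Real.norm_of_nonneg (inv_nonneg.2 hL.le)] at hupper
    rw [← hδ_inner]
    linarith
  calc ‖δ‖ ^ 2 = 2 * L * (L⁻¹ * ‖δ‖ ^ 2 - L / 2 * (L⁻¹ * ‖δ‖) ^ 2) := by field_simp; ring
    _ ≤ 2 * L * (f x - f w - ⟪g w, x - w⟫) := by gcongr

theorem integral_inner_gradient_eq_zero_of_isMinOn {Ω : Type*} [MeasurableSpace Ω]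
    {μ : Measure Ω} {f : Ω → E → ℝ} {g : Ω → E} {w : E}
    (hconv : ∀ ω, ConvexOn ℝ Set.univ (f ω)) (hint : ∀ y, Integrable (fun ω ↦ f ω y) μ)
    (hg : ∀ ω, HasGradientAt (f ω) (g ω) w)
    (hmin : IsMinOn (fun y ↦ ∫ ω, f ω y ∂μ) Set.univ w) (v : E) :
    ∫ ω, ⟪g ω, v⟫ ∂μ = 0 :=
  (hmin.isLocalMin Filter.univ_mem).hasLineDerivAt_eq_zero
    (hasLineDerivAt_integral_of_convexOn hconv hint
      fun ω ↦ hasLineDerivAt_of_hasGradientAt (hg ω) v)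

theorem expected_grad_diff_sq_le_general {Ω : Type*} [MeasurableSpace Ω] {μ : Measure Ω}
    (hL : 0 ≤ L) {f : Ω → E → ℝ} {gradf : Ω → E → E}
    (hconv : ∀ ω, ConvexOn ℝ Set.univ (f ω))
    (hgrad : ∀ ω y, HasGradientAt (f ω) (gradf ω y) y)
    (hlip : ∀ ω u v, ‖gradf ω u - gradf ω v‖ ≤ L * ‖u - v‖)
    (hfint : ∀ y, Integrable (fun ω ↦ f ω y) μ) {w : E}
    (hmin : IsMinOn (fun y ↦ ∫ ω, f ω y ∂μ) Set.univ w)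
    (hint : Integrable (fun ω ↦ ‖gradf ω x - gradf ω w‖ ^ 2) μ) :
    ∫ ω, ‖gradf ω x - gradf ω w‖ ^ 2 ∂μ ≤
      2 * L * (∫ ω, f ω x ∂μ - ∫ ω, f ω w ∂μ) := by
  have hinner_int : Integrable (fun ω ↦ ⟪gradf ω w, x - w⟫) μ :=
    integrable_of_convexOn_of_hasLineDerivAt hconv hfint
      fun ω ↦ hasLineDerivAt_of_hasGradientAt (hgrad ω w) (x - w)
  have hinner_zero : ∫ ω, ⟪gradf ω w, x - w⟫ ∂μ = 0 :=
    integral_inner_gradient_eq_zero_of_isMinOn hconv hfint (fun ω ↦ hgrad ω w) hmin (x - w)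
  have hdiff_int : Integrable (fun ω ↦ f ω x - f ω w) μ := (hfint x).sub (hfint w)
  calc ∫ ω, ‖gradf ω x - gradf ω w‖ ^ 2 ∂μ
      ≤ ∫ ω, 2 * L * (f ω x - f ω w - ⟪gradf ω w, x - w⟫) ∂μ :=
        integral_mono hint ((hdiff_int.sub hinner_int).const_mul _) fun ω ↦
          norm_gradient_sub_sq_le_of_convexOn hL (hconv ω) (hgrad ω) (fun y ↦ hlip ω y x) w
    _ = 2 * L * (∫ ω, f ω x ∂μ - ∫ ω, f ω w ∂μ) := by
        rw [integral_const_mul, integral_sub hdiff_int hinner_int,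
          integral_sub (hfint x) (hfint w), hinner_zero, sub_zero]

end Gradient

/-- Suppose `D` (modelled by a probability measure `μ` on an index space `Ω`) is a distribution
over convex `L`-smooth functions `f ω : ℝ^d → ℝ`, let `F w = E_{f∼D}[f(w)]`, and let `w*` be a
global minimizer of `F` (so `∇F(w*) = 0`). Then for every `x`,
`E_{f∼D}[‖∇f(x) − ∇f(w*)‖²] ≤ 2L (F(x) − F(w*))`. -/
theorem expected_grad_diff_sq_le {d : ℕ} {Ω : Type*} [MeasurableSpace Ω]
    (μ : Measure Ω) [IsProbabilityMeasure μ]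
    (L : ℝ) (hL : 0 ≤ L)
    (f : Ω → EuclideanSpace ℝ (Fin d) → ℝ)
    (gradf : Ω → EuclideanSpace ℝ (Fin d) → EuclideanSpace ℝ (Fin d))
    (hconv : ∀ ω, ConvexOn ℝ Set.univ (f ω))
    (hgrad : ∀ ω x, HasGradientAt (f ω) (gradf ω x) x)
    (hlip : ∀ ω, ∀ u v : EuclideanSpace ℝ (Fin d), ‖gradf ω u - gradf ω v‖ ≤ L * ‖u - v‖)
    (F : EuclideanSpace ℝ (Fin d) → ℝ)
    (hF : ∀ x, F x = ∫ ω, f ω x ∂μ)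
    (gradF : EuclideanSpace ℝ (Fin d) → EuclideanSpace ℝ (Fin d))
    (hgradF : ∀ x, gradF x = ∫ ω, gradf ω x ∂μ)
    (hfint : ∀ x, Integrable (fun ω => f ω x) μ)
    (hgradint : ∀ x, Integrable (fun ω => gradf ω x) μ)
    (wstar : EuclideanSpace ℝ (Fin d))
    (hmin : ∀ u, F wstar ≤ F u)
    (x : EuclideanSpace ℝ (Fin d))
    (hint : Integrable (fun ω => ‖gradf ω x - gradf ω wstar‖ ^ 2) μ) :
    (∫ ω, ‖gradf ω x - gradf ω wstar‖ ^ 2 ∂μ) ≤ 2 * L * (F x - F wstar) := by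
  obtain rfl : F = fun y ↦ ∫ ω, f ω y ∂μ := funext hF
  exact expected_grad_diff_sq_le_general hL hconv hgrad hlip hfint (fun u _ ↦ hmin u) hint
end

section
/- Fix points w_t, v_k ∈ ℝ^d and a vector b_t ∈ ℝ^d, and let g_t = ∇f(w_t) − ∇f(v_k) + ∇F(v_k) + b_t where f ∼ D. Then E[‖g_t‖²] ≤ 8L (F(w_t) − F(w*)) + 8L (F(v_k) − F(w*)) + 2‖b_t‖². -/
open MeasureTheory

open scoped InnerProductSpace NNReal Topology

/-!
A convex function with `K`-Lipschitz gradient satisfies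
`‖∇f x - ∇f y‖² ≤ 2K (f x - f y - ⟪∇f y, x - y⟫)`: compare the linear lower bound at `y` with the
quadratic upper bound at `x`, both at the point reached from `x` by a step `K⁻¹` along
`-(∇f x - ∇f y)`. Averaged over `f` with `y = w*`, the linear term vanishes because `∇F w* = 0`.
Writing `X = ∇f w_t - ∇f w*` and `Y = ∇f v_k - ∇f w*`, the estimator is
`g_t = X - (Y - 𝔼 Y) + b_t`; two uses of `‖a + b‖² ≤ 2‖a‖² + 2‖b‖²` and
`𝔼 ‖Y - 𝔼 Y‖² ≤ 𝔼 ‖Y‖²` finish the proof.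
-/

theorem norm_sub_add_sq_le {E : Type*} [SeminormedAddCommGroup E] (a c b : E) :
    ‖a - c + b‖ ^ 2 ≤ 4 * ‖a‖ ^ 2 + 4 * ‖c‖ ^ 2 + 2 * ‖b‖ ^ 2 := by
  calc ‖a - c + b‖ ^ 2
      ≤ (‖a - c‖ + ‖b‖) ^ 2 := by gcongr; exact norm_add_le _ _
    _ ≤ 2 * (‖a - c‖ ^ 2 + ‖b‖ ^ 2) := add_sq_le
    _ ≤ 2 * ((‖a‖ + ‖c‖) ^ 2 + ‖b‖ ^ 2) := by gcongr; exact norm_sub_le _ _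
    _ ≤ 2 * (2 * (‖a‖ ^ 2 + ‖c‖ ^ 2) + ‖b‖ ^ 2) := by gcongr; exact add_sq_le
    _ = 4 * ‖a‖ ^ 2 + 4 * ‖c‖ ^ 2 + 2 * ‖b‖ ^ 2 := by ring

section NormedSpace

variable {E G : Type*} [NormedAddCommGroup E] [NormedSpace ℝ E] [NormedAddCommGroup G]
  [NormedSpace ℝ G]

theorem hasDerivAt_comp_add_smul {f : E → G} {f' : E →L[ℝ] G} {x u : E} {t : ℝ}
    (hf : HasFDerivAt f f' (x + t • u)) : HasDerivAt (fun s : ℝ => f (x + s • u)) (f' u) t := by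
  have hline : HasDerivAt (fun s : ℝ => x + s • u) u t := by
    simpa only [one_smul] using ((hasDerivAt_id' t).smul_const u).const_add x
  exact hf.comp_hasDerivAt t hline

theorem norm_sub_sub_fderiv_le_of_lipschitzWith {f : E → G} {f' : E → E →L[ℝ] G} {K : ℝ≥0}
    (hf : ∀ x, HasFDerivAt f (f' x) x) (hf' : LipschitzWith K f') (x u : E) :
    ‖f (x + u) - f x - f' x u‖ ≤ K / 2 * ‖u‖ ^ 2 := by
  have hremainder (t : ℝ) : HasDerivAt (fun s : ℝ => f (x + s • u) - f x - s • f' x u)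
      (f' (x + t • u) u - f' x u) t := by
    simpa only [one_smul] using ((hasDerivAt_comp_add_smul (hf _)).sub_const (f x)).fun_sub
      ((hasDerivAt_id' t).smul_const (f' x u))
  have hquadratic (t : ℝ) :
      HasDerivAt (fun s : ℝ => K / 2 * ‖u‖ ^ 2 * s ^ 2) (K * ‖u‖ ^ 2 * t) t := by
    convert! (hasDerivAt_pow 2 t).const_mul (K / 2 * ‖u‖ ^ 2) using 1
    simp only [Nat.cast_ofNat, Nat.add_one_sub_one, pow_one]
    ring
  have hderiv_le (t : ℝ) (ht : t ∈ Set.Ico (0 : ℝ) 1) :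
      ‖f' (x + t • u) u - f' x u‖ ≤ K * ‖u‖ ^ 2 * t := by
    calc ‖f' (x + t • u) u - f' x u‖
        ≤ ‖f' (x + t • u) - f' x‖ * ‖u‖ := (f' (x + t • u) - f' x).le_opNorm u
      _ ≤ K * ‖x + t • u - x‖ * ‖u‖ := by gcongr; exact hf'.norm_sub_le _ _
      _ = K * ‖u‖ ^ 2 * t := by
        rw [add_sub_cancel_left, norm_smul, Real.norm_of_nonneg ht.1]
        ring
  have hbound := image_norm_le_of_norm_deriv_right_le_deriv_boundary
    (fun t _ => (hremainder t).continuousAt.continuousWithinAt)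
    (fun t _ => (hremainder t).hasDerivWithinAt) (by simp) hquadratic hderiv_le
    (Set.right_mem_Icc.2 zero_le_one)
  simpa using hbound

theorem add_fderiv_sub_le_of_convexOn {s : Set E} {f : E → ℝ} {f' : E →L[ℝ] ℝ} {x y : E}
    (hf : ConvexOn ℝ s f) (hx : x ∈ s) (hy : y ∈ s) (hf' : HasFDerivAt f f' x) :
    f x + f' (y - x) ≤ f y := by
  have hconv := hf.comp_affineMap (AffineMap.lineMap x y : ℝ →ᵃ[ℝ] E)
  have hderiv : HasDerivAt (f ∘ AffineMap.lineMap (k := ℝ) x y) (f' (y - x)) 0 :=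
    HasFDerivAt.comp_hasDerivAt 0 (by simpa using hf') AffineMap.hasDerivAt_lineMap
  have hslope := hconv.le_slope_of_hasDerivAt (by simpa using hx) (by simpa using hy)
    zero_lt_one hderiv
  simp only [slope_def_field, Function.comp_apply, AffineMap.lineMap_apply_zero,
    AffineMap.lineMap_apply_one, sub_zero, div_one] at hslope
  linarith

theorem hasFDerivAt_integral_of_lipschitzWith {Ω : Type*} [MeasurableSpace Ω] {μ : Measure Ω}
    [IsFiniteMeasure μ] {f : Ω → E → G} {f' : Ω → E → E →L[ℝ] G} {K : ℝ≥0} {x : E}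
    (hf : ∀ᵐ ω ∂μ, ∀ y, HasFDerivAt (f ω) (f' ω y) y) (hf' : ∀ᵐ ω ∂μ, LipschitzWith K (f' ω))
    (hmeas : ∀ᶠ y in 𝓝 x, AEStronglyMeasurable (fun ω => f ω y) μ)
    (hint : Integrable (fun ω => f ω x) μ) (hint' : Integrable (fun ω => f' ω x) μ) :
    HasFDerivAt (fun y => ∫ ω, f ω y ∂μ) (∫ ω, f' ω x ∂μ) x := by
  refine hasFDerivAt_integral_of_dominated_of_fderiv_le
    (F' := fun y ω => f' ω y) (bound := fun ω => K + ‖f' ω x‖)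
    (Metric.ball_mem_nhds x one_pos) hmeas hint hint'.aestronglyMeasurable ?_
    ((integrable_const _).add hint'.norm) (hf.mono fun ω h y _ => h y)
  filter_upwards [hf'] with ω hω y hy
  calc ‖f' ω y‖ ≤ ‖f' ω y - f' ω x‖ + ‖f' ω x‖ := norm_le_norm_sub_add _ _
    _ ≤ K * ‖y - x‖ + ‖f' ω x‖ := by gcongr; exact hω.norm_sub_le _ _
    _ ≤ K + ‖f' ω x‖ := by
      gcongr
      exact mul_le_of_le_one_right K.2 (mem_ball_iff_norm.1 hy).le

end NormedSpace

section Hilbert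

variable {E : Type*} [NormedAddCommGroup E] [InnerProductSpace ℝ E] [CompleteSpace E]

theorem norm_gradient_sub_sq_le {f : E → ℝ} {f' : E → E} {K : ℝ≥0}
    (hconv : ConvexOn ℝ Set.univ f) (hgrad : ∀ x, HasGradientAt f (f' x) x)
    (hlip : LipschitzWith K f') (x y : E) :
    ‖f' x - f' y‖ ^ 2 ≤ 2 * K * (f x - f y - ⟪f' y, x - y⟫_ℝ) := by
  rcases eq_or_ne K 0 with rfl | hK
  · have heq : ‖f' x - f' y‖ ≤ 0 := by simpa using hlip.norm_sub_le x y
    simp [heq.antisymm (norm_nonneg _)]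
  set u := -(K : ℝ)⁻¹ • (f' x - f' y) with hu
  have hupper : f (x + u) - f x - ⟪f' x, u⟫_ℝ ≤ K / 2 * ‖u‖ ^ 2 :=
    (le_abs_self _).trans <| norm_sub_sub_fderiv_le_of_lipschitzWith
      (fun z => (hgrad z).hasFDerivAt)
      ((InnerProductSpace.toDual ℝ E).isometry.lipschitzWith_iff K |>.2 hlip) x u
  have hlower : f y + ⟪f' y, x + u - y⟫_ℝ ≤ f (x + u) :=
    add_fderiv_sub_le_of_convexOn hconv trivial trivial (hgrad y).hasFDerivAt
  have hinner : ⟪f' x, u⟫_ℝ - ⟪f' y, u⟫_ℝ = -(K : ℝ)⁻¹ * ‖f' x - f' y‖ ^ 2 := by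
    rw [← inner_sub_left, hu, inner_smul_right, real_inner_self_eq_norm_sq]
  have hnorm : ‖u‖ ^ 2 = (K : ℝ)⁻¹ ^ 2 * ‖f' x - f' y‖ ^ 2 := by
    rw [hu, norm_smul, mul_pow, norm_neg, Real.norm_of_nonneg (by positivity)]
  rw [add_sub_right_comm, inner_add_right] at hlower
  rw [hnorm] at hupper
  calc ‖f' x - f' y‖ ^ 2
      = 2 * K * ((K : ℝ)⁻¹ * ‖f' x - f' y‖ ^ 2
          - K / 2 * ((K : ℝ)⁻¹ ^ 2 * ‖f' x - f' y‖ ^ 2)) := by field_simp; ring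
    _ ≤ 2 * K * (f x - f y - ⟪f' y, x - y⟫_ℝ) :=
        mul_le_mul_of_nonneg_left (by linarith) (by positivity)

variable {Ω : Type*} [MeasurableSpace Ω] {μ : Measure Ω}

theorem integral_norm_sub_integral_sq_le [IsProbabilityMeasure μ] {X : Ω → E} (hX : MemLp X 2 μ) :
    ∫ ω, ‖X ω - ∫ ω', X ω' ∂μ‖ ^ 2 ∂μ ≤ ∫ ω, ‖X ω‖ ^ 2 ∂μ := by
  set m := ∫ ω, X ω ∂μ with hm
  have hXint : Integrable X μ := hX.integrable one_le_two
  have hsq : Integrable (fun ω => ‖X ω‖ ^ 2) μ := hX.integrable_norm_pow two_ne_zero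
  have hcross : Integrable (fun ω => 2 * ⟪m, X ω⟫_ℝ) μ := (hXint.const_inner m).const_mul 2
  have hdiff : Integrable (fun ω => ‖X ω‖ ^ 2 - 2 * ⟪m, X ω⟫_ℝ) μ := hsq.sub hcross
  calc ∫ ω, ‖X ω - m‖ ^ 2 ∂μ
      = ∫ ω, (‖X ω‖ ^ 2 - 2 * ⟪m, X ω⟫_ℝ + ‖m‖ ^ 2) ∂μ := by
        simp only [norm_sub_sq_real, real_inner_comm m]
    _ = ∫ ω, ‖X ω‖ ^ 2 ∂μ - 2 * ⟪m, m⟫_ℝ + ‖m‖ ^ 2 := by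
        rw [integral_add hdiff (integrable_const _), integral_sub hsq hcross,
          integral_const_mul, integral_inner hXint, ← hm, integral_const, probReal_univ, one_smul]
    _ ≤ ∫ ω, ‖X ω‖ ^ 2 ∂μ := by
        rw [real_inner_self_eq_norm_sq]
        linarith [sq_nonneg ‖m‖]

theorem integral_norm_sub_centered_add_sq_le [IsProbabilityMeasure μ] {X Y : Ω → E}
    (hX : MemLp X 2 μ) (hY : MemLp Y 2 μ) (b : E) :
    ∫ ω, ‖X ω - (Y ω - ∫ ω', Y ω' ∂μ) + b‖ ^ 2 ∂μ
      ≤ 4 * ∫ ω, ‖X ω‖ ^ 2 ∂μ + 4 * ∫ ω, ‖Y ω‖ ^ 2 ∂μ + 2 * ‖b‖ ^ 2 := by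
  set Z : Ω → E := fun ω => Y ω - ∫ ω', Y ω' ∂μ
  have hZ : MemLp Z 2 μ := hY.sub (memLp_const _)
  have hXsq : Integrable (fun ω => 4 * ‖X ω‖ ^ 2) μ :=
    (hX.integrable_norm_pow two_ne_zero).const_mul 4
  have hZsq : Integrable (fun ω => 4 * ‖Z ω‖ ^ 2) μ :=
    (hZ.integrable_norm_pow two_ne_zero).const_mul 4
  calc ∫ ω, ‖X ω - Z ω + b‖ ^ 2 ∂μ
      ≤ ∫ ω, (4 * ‖X ω‖ ^ 2 + 4 * ‖Z ω‖ ^ 2 + 2 * ‖b‖ ^ 2) ∂μ :=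
        integral_mono (((hX.sub hZ).add (memLp_const b)).integrable_norm_pow two_ne_zero)
          ((hXsq.add hZsq).add (integrable_const _)) fun ω => norm_sub_add_sq_le _ _ _
    _ = 4 * ∫ ω, ‖X ω‖ ^ 2 ∂μ + 4 * ∫ ω, ‖Z ω‖ ^ 2 ∂μ + 2 * ‖b‖ ^ 2 := by
        rw [integral_add (hXsq.fun_add hZsq) (integrable_const _), integral_add hXsq hZsq,
          integral_const_mul, integral_const_mul, integral_const, probReal_univ, one_smul]
    _ ≤ 4 * ∫ ω, ‖X ω‖ ^ 2 ∂μ + 4 * ∫ ω, ‖Y ω‖ ^ 2 ∂μ + 2 * ‖b‖ ^ 2 := by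
        gcongr _ + 4 * ?_ + _
        exact integral_norm_sub_integral_sq_le hY

section RandomFunction

variable {f : Ω → E → ℝ} {f' : Ω → E → E} {K : ℝ≥0} {x y : E}

theorem hasGradientAt_integral_of_lipschitzWith [IsFiniteMeasure μ]
    (hgrad : ∀ᵐ ω ∂μ, ∀ y, HasGradientAt (f ω) (f' ω y) y)
    (hlip : ∀ᵐ ω ∂μ, LipschitzWith K (f' ω))
    (hmeas : ∀ᶠ y in 𝓝 x, AEStronglyMeasurable (fun ω => f ω y) μ)
    (hint : Integrable (fun ω => f ω x) μ) (hint' : Integrable (fun ω => f' ω x) μ) :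
    HasGradientAt (fun y => ∫ ω, f ω y ∂μ) (∫ ω, f' ω x ∂μ) x := by
  let toDual := InnerProductSpace.toDual ℝ E
  have hfderiv := hasFDerivAt_integral_of_lipschitzWith (f' := fun ω y => toDual (f' ω y))
    (hgrad.mono fun ω h y => (h y).hasFDerivAt)
    (hlip.mono fun ω h => (toDual.isometry.lipschitzWith_iff K).2 h)
    hmeas hint (toDual.toContinuousLinearEquiv.integrable_comp_iff.2 hint')
  rw [hasGradientAt_iff_hasFDerivAt]
  convert! hfderiv using 1
  exact (toDual.toContinuousLinearEquiv.integral_comp_comm _).symm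

theorem integral_gradient_eq_zero_of_isLocalMin [IsFiniteMeasure μ]
    (hgrad : ∀ᵐ ω ∂μ, ∀ y, HasGradientAt (f ω) (f' ω y) y)
    (hlip : ∀ᵐ ω ∂μ, LipschitzWith K (f' ω))
    (hmeas : ∀ᶠ y in 𝓝 x, AEStronglyMeasurable (fun ω => f ω y) μ)
    (hint : Integrable (fun ω => f ω x) μ) (hint' : Integrable (fun ω => f' ω x) μ)
    (hmin : IsLocalMin (fun y => ∫ ω, f ω y ∂μ) x) :
    ∫ ω, f' ω x ∂μ = 0 := by
  have hgradient := hasGradientAt_integral_of_lipschitzWith hgrad hlip hmeas hint hint'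
  exact (InnerProductSpace.toDual ℝ E).map_eq_zero_iff.1
    (hmin.hasFDerivAt_eq_zero hgradient.hasFDerivAt)

theorem memLp_two_gradient_sub (hconv : ∀ᵐ ω ∂μ, ConvexOn ℝ Set.univ (f ω))
    (hgrad : ∀ᵐ ω ∂μ, ∀ z, HasGradientAt (f ω) (f' ω z) z)
    (hlip : ∀ᵐ ω ∂μ, LipschitzWith K (f' ω))
    (hfx : Integrable (fun ω => f ω x) μ) (hfy : Integrable (fun ω => f ω y) μ)
    (hf'x : AEStronglyMeasurable (fun ω => f' ω x) μ) (hf'y : Integrable (fun ω => f' ω y) μ) :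
    MemLp (fun ω => f' ω x - f' ω y) 2 μ := by
  have hmeas : AEStronglyMeasurable (fun ω => f' ω x - f' ω y) μ :=
    hf'x.sub hf'y.aestronglyMeasurable
  have hbound : Integrable (fun ω => 2 * K * (f ω x - f ω y - ⟪f' ω y, x - y⟫_ℝ)) μ :=
    ((hfx.sub hfy).sub (hf'y.inner_const _)).const_mul _
  refine (memLp_two_iff_integrable_sq_norm hmeas).2 (hbound.mono' (hmeas.norm.pow 2) ?_)
  filter_upwards [hconv, hgrad, hlip] with ω hconv hgrad hlip
  rw [Real.norm_of_nonneg (by positivity)]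
  exact norm_gradient_sub_sq_le hconv hgrad hlip x y

theorem integral_norm_gradient_sub_sq_le (hconv : ∀ᵐ ω ∂μ, ConvexOn ℝ Set.univ (f ω))
    (hgrad : ∀ᵐ ω ∂μ, ∀ z, HasGradientAt (f ω) (f' ω z) z)
    (hlip : ∀ᵐ ω ∂μ, LipschitzWith K (f' ω))
    (hfx : Integrable (fun ω => f ω x) μ) (hfy : Integrable (fun ω => f ω y) μ)
    (hf'y : Integrable (fun ω => f' ω y) μ) :
    ∫ ω, ‖f' ω x - f' ω y‖ ^ 2 ∂μ
      ≤ 2 * K * (∫ ω, f ω x ∂μ - ∫ ω, f ω y ∂μ - ⟪∫ ω, f' ω y ∂μ, x - y⟫_ℝ) := by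
  have hsub : Integrable (fun ω => f ω x - f ω y) μ := hfx.sub hfy
  have hinner : Integrable (fun ω => ⟪f' ω y, x - y⟫_ℝ) μ := hf'y.inner_const _
  have hinner_eq : ∫ ω, ⟪f' ω y, x - y⟫_ℝ ∂μ = ⟪∫ ω, f' ω y ∂μ, x - y⟫_ℝ := by
    simpa only [real_inner_comm (x - y)] using integral_inner hf'y (x - y)
  calc ∫ ω, ‖f' ω x - f' ω y‖ ^ 2 ∂μ
      ≤ ∫ ω, 2 * K * (f ω x - f ω y - ⟪f' ω y, x - y⟫_ℝ) ∂μ := by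
        refine integral_mono_of_nonneg (ae_of_all μ fun ω => by positivity)
          ((hsub.sub hinner).const_mul _) ?_
        filter_upwards [hconv, hgrad, hlip] with ω hconv hgrad hlip
        exact norm_gradient_sub_sq_le hconv hgrad hlip x y
    _ = 2 * K * (∫ ω, f ω x ∂μ - ∫ ω, f ω y ∂μ - ⟪∫ ω, f' ω y ∂μ, x - y⟫_ℝ) := by
        rw [integral_const_mul, integral_sub hsub hinner, integral_sub hfx hfy, hinner_eq]

end RandomFunction

theorem variance_reduced_grad_sq_le_general [IsProbabilityMeasure μ] {L : ℝ≥0}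
    {f : Ω → E → ℝ} {gradf : Ω → E → E}
    (hconv : ∀ᵐ ω ∂μ, ConvexOn ℝ Set.univ (f ω))
    (hgrad : ∀ᵐ ω ∂μ, ∀ x, HasGradientAt (f ω) (gradf ω x) x)
    (hlip : ∀ᵐ ω ∂μ, LipschitzWith L (gradf ω))
    {F : E → ℝ} (hF : ∀ x, F x = ∫ ω, f ω x ∂μ)
    {gradF : E → E} (hgradF : ∀ x, gradF x = ∫ ω, gradf ω x ∂μ)
    (hfint : ∀ x, Integrable (fun ω => f ω x) μ)
    (hgradint : ∀ x, Integrable (fun ω => gradf ω x) μ)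
    {wstar : E} (hmin : ∀ u, F wstar ≤ F u) (w v b : E) :
    Integrable (fun ω => ‖gradf ω w - gradf ω v + gradF v + b‖ ^ 2) μ ∧
      ∫ ω, ‖gradf ω w - gradf ω v + gradF v + b‖ ^ 2 ∂μ
        ≤ 8 * L * (F w - F wstar) + 8 * L * (F v - F wstar) + 2 * ‖b‖ ^ 2 := by
  have hstationary : ∫ ω, gradf ω wstar ∂μ = 0 :=
    integral_gradient_eq_zero_of_isLocalMin hgrad hlip
      (.of_forall fun x => (hfint x).aestronglyMeasurable) (hfint wstar) (hgradint wstar)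
      (.of_forall fun u => by simpa only [hF] using hmin u)
  have hmemLp (x : E) : MemLp (fun ω => gradf ω x - gradf ω wstar) 2 μ :=
    memLp_two_gradient_sub hconv hgrad hlip (hfint x) (hfint wstar)
      (hgradint x).aestronglyMeasurable (hgradint wstar)
  have hsq_le (x : E) : ∫ ω, ‖gradf ω x - gradf ω wstar‖ ^ 2 ∂μ ≤ 2 * L * (F x - F wstar) := by
    simpa only [hstationary, inner_zero_left, sub_zero, ← hF] using
      integral_norm_gradient_sub_sq_le hconv hgrad hlip (hfint x) (hfint wstar) (hgradint wstar)
  have hmean : ∫ ω, (gradf ω v - gradf ω wstar) ∂μ = gradF v := by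
    rw [integral_sub (hgradint v) (hgradint wstar), hstationary, sub_zero, hgradF]
  have hsplit (ω : Ω) : gradf ω w - gradf ω v + gradF v + b =
      gradf ω w - gradf ω wstar - (gradf ω v - gradf ω wstar - gradF v) + b := by abel
  simp only [hsplit]
  refine ⟨(((hmemLp w).sub ((hmemLp v).sub (memLp_const _))).add
    (memLp_const b)).integrable_norm_pow two_ne_zero, ?_⟩
  have hvariance := integral_norm_sub_centered_add_sq_le (hmemLp w) (hmemLp v) b
  rw [hmean] at hvariance
  linarith [hsq_le w, hsq_le v]

end Hilbert

/-- Fix points `w_t, v_k ∈ ℝ^d` and a vector `b_t ∈ ℝ^d`, and let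
`g_t = ∇f(w_t) − ∇f(v_k) + ∇F(v_k) + b_t` where `f ∼ D`, `D` a distribution over convex
`L`-smooth functions, `F = E_{f∼D}[f]`, and `w*` a global minimizer of `F`. Then
`E[‖g_t‖²] ≤ 8L (F(w_t) − F(w*)) + 8L (F(v_k) − F(w*)) + 2‖b_t‖²`. -/
theorem variance_reduced_grad_sq_le {d : ℕ} {Ω : Type*} [MeasurableSpace Ω]
    (μ : Measure Ω) [IsProbabilityMeasure μ]
    (L : ℝ) (hL : 0 ≤ L)
    (f : Ω → EuclideanSpace ℝ (Fin d) → ℝ)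
    (gradf : Ω → EuclideanSpace ℝ (Fin d) → EuclideanSpace ℝ (Fin d))
    (hconv : ∀ ω, ConvexOn ℝ Set.univ (f ω))
    (hgrad : ∀ ω x, HasGradientAt (f ω) (gradf ω x) x)
    (hlip : ∀ ω, ∀ u v : EuclideanSpace ℝ (Fin d), ‖gradf ω u - gradf ω v‖ ≤ L * ‖u - v‖)
    (F : EuclideanSpace ℝ (Fin d) → ℝ)
    (hF : ∀ x, F x = ∫ ω, f ω x ∂μ)
    (gradF : EuclideanSpace ℝ (Fin d) → EuclideanSpace ℝ (Fin d))
    (hgradF : ∀ x, gradF x = ∫ ω, gradf ω x ∂μ)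
    (hfint : ∀ x, Integrable (fun ω => f ω x) μ)
    (hgradint : ∀ x, Integrable (fun ω => gradf ω x) μ)
    (wstar : EuclideanSpace ℝ (Fin d))
    (hmin : ∀ u, F wstar ≤ F u)
    (wt vk bt : EuclideanSpace ℝ (Fin d))
    (g : Ω → EuclideanSpace ℝ (Fin d))
    (hg : ∀ ω, g ω = gradf ω wt - gradf ω vk + gradF vk + bt)
    (hint : Integrable (fun ω => ‖g ω‖ ^ 2) μ) :
    (∫ ω, ‖g ω‖ ^ 2 ∂μ)
      ≤ 8 * L * (F wt - F wstar) + 8 * L * (F vk - F wstar) + 2 * ‖bt‖ ^ 2 := by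
  lift L to ℝ≥0 using hL
  have hlip' (ω : Ω) : LipschitzWith L (gradf ω) := .of_dist_le_mul <| by
    simpa only [dist_eq_norm] using hlip ω
  simpa only [hg] using (variance_reduced_grad_sq_le_general (ae_of_all μ hconv)
    (ae_of_all μ hgrad) (ae_of_all μ hlip') hF hgradF hfint hgradint hmin wt vk bt).2
end

section
/- If a, b, c, d and x are non-negative real numbers such that x ≤ a√(bx + c) + d, then x ≤ 4a²b + 2a√c + 2d. -/
lemma sqrt_add_le_sqrt_add_sqrt {x y : ℝ} (hx : 0 ≤ x) (hy : 0 ≤ y) :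
    √(x + y) ≤ √x + √y := by
  simpa only [Real.sqrt_eq_rpow] using
    Real.rpow_add_le_add_rpow hx hy one_half_pos.le one_half_lt_one.le

lemma two_mul_mul_sqrt_mul_le (a : ℝ) {b x : ℝ} (hb : 0 ≤ b) (hx : 0 ≤ x) :
    2 * (a * √(b * x)) ≤ a ^ 2 * b + x :=
  calc 2 * (a * √(b * x)) = 2 * (a * √b) * √x := by rw [Real.sqrt_mul hb]; ring
    _ ≤ (a * √b) ^ 2 + √x ^ 2 := two_mul_le_add_sq _ _
    _ = a ^ 2 * b + x := by rw [mul_pow, Real.sq_sqrt hb, Real.sq_sqrt hx]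

theorem xlesqrt_general {a b c x : ℝ} (d : ℝ)
    (ha : 0 ≤ a) (hb : 0 ≤ b) (hc : 0 ≤ c) (hx : 0 ≤ x)
    (h : x ≤ a * √(b * x + c) + d) :
    x ≤ a ^ 2 * b + 2 * a * √c + 2 * d := by
  have sqrt_split : a * √(b * x + c) ≤ a * (√(b * x) + √c) := by
    gcongr
    exact sqrt_add_le_sqrt_add_sqrt (mul_nonneg hb hx) hc
  -- AM-GM costs only half of `x`, which the left-hand side absorbs.
  have am_gm : 2 * (a * √(b * x)) ≤ a ^ 2 * b + x := two_mul_mul_sqrt_mul_le a hb hx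
  linarith

/-- If `a, b, c, d` and `x` are non-negative real numbers such that
`x ≤ a * √(b * x + c) + d`, then `x ≤ 4 * a² * b + 2 * a * √c + 2 * d`. -/
theorem xlesqrt (a b c d x : ℝ)
    (ha : 0 ≤ a) (hb : 0 ≤ b) (hc : 0 ≤ c) (hd : 0 ≤ d) (hx : 0 ≤ x)
    (h : x ≤ a * Real.sqrt (b * x + c) + d) :
    x ≤ 4 * a ^ 2 * b + 2 * a * Real.sqrt c + 2 * d := by
  have sharp_bound := xlesqrt_general d ha hb hc hx h
  linarith [mul_nonneg (sq_nonneg a) hb]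
end

section
/- If a, b, c, d, e, f and x are non-negative real numbers such that x ≤ a√(b√(cx + d) + e) + f, then x ≤ 2^{7/3} a^{4/3} b^{2/3} c^{1/3} + 2a√(2b√(2d) + 2e) + 2f. -/
/-!
Subadditivity of the square root turns the hypothesis into `x ≤ K * x ^ (1 / 4) + M` with
`K = a * √b * c ^ (1 / 4)` and `M = a * √(b * √d + e) + f`. Young's inequality gives
`K * x ^ (1 / 4) ≤ (3 / 4) * K ^ (4 / 3) + x / 4`, and absorbing `x / 4` into the left-hand side
yields `x ≤ K ^ (4 / 3) + (4 / 3) * M`, which is sharper than the stated bound.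
-/

theorem mul_rpow_le_one_sub_mul_rpow_inv_add_mul {K x p : ℝ} (hK : 0 ≤ K) (hx : 0 ≤ x)
    (hp₀ : 0 ≤ p) (hp₁ : p < 1) :
    K * x ^ p ≤ (1 - p) * K ^ (1 - p)⁻¹ + p * x := by
  have hp : 0 < 1 - p := sub_pos.mpr hp₁
  calc K * x ^ p = (K ^ (1 - p)⁻¹) ^ (1 - p) * x ^ p := by
        rw [← Real.rpow_mul hK, inv_mul_cancel₀ hp.ne', Real.rpow_one]
    _ ≤ (1 - p) * K ^ (1 - p)⁻¹ + p * x :=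
        Real.geom_mean_le_arith_mean2_weighted hp.le hp₀ (by positivity) hx (sub_add_cancel 1 p)

theorem le_rpow_inv_add_inv_mul_of_le_mul_rpow_add {K M x p : ℝ} (hK : 0 ≤ K) (hx : 0 ≤ x)
    (hp₀ : 0 ≤ p) (hp₁ : p < 1) (h : x ≤ K * x ^ p + M) :
    x ≤ K ^ (1 - p)⁻¹ + (1 - p)⁻¹ * M := by
  have hp : 0 < 1 - p := sub_pos.mpr hp₁
  have young := mul_rpow_le_one_sub_mul_rpow_inv_add_mul hK hx hp₀ hp₁
  rw [← sub_le_iff_le_add', le_inv_mul_iff₀ hp]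
  linarith

theorem sqrt_add_le_sqrt_add_sqrt_s14 {u v : ℝ} (hu : 0 ≤ u) (hv : 0 ≤ v) : √(u + v) ≤ √u + √v := by
  simp only [Real.sqrt_eq_rpow]
  exact Real.rpow_add_le_add_rpow hu hv (by norm_num) (by norm_num)

theorem sqrt_sqrt_eq_rpow {y : ℝ} (hy : 0 ≤ y) : √(√y) = y ^ ((1 : ℝ) / 4) := by
  rw [Real.sqrt_eq_rpow, Real.sqrt_eq_rpow, ← Real.rpow_mul hy]
  norm_num

theorem sqrt_mul_sqrt_add_add_le {b d e y : ℝ} (hb : 0 ≤ b) (hd : 0 ≤ d)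
    (hde : 0 ≤ b * √d + e) (hy : 0 ≤ y) :
    √(b * √(y + d) + e) ≤ √b * y ^ ((1 : ℝ) / 4) + √(b * √d + e) :=
  calc √(b * √(y + d) + e) ≤ √(b * (√y + √d) + e) := by
        gcongr
        exact sqrt_add_le_sqrt_add_sqrt_s14 hy hd
    _ = √(b * √y + (b * √d + e)) := by rw [mul_add, add_assoc]
    _ ≤ √(b * √y) + √(b * √d + e) := sqrt_add_le_sqrt_add_sqrt_s14 (by positivity) hde
    _ = √b * y ^ ((1 : ℝ) / 4) + √(b * √d + e) := by
        rw [Real.sqrt_mul hb, sqrt_sqrt_eq_rpow hy]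

theorem mul_sqrt_mul_rpow_rpow_four_thirds {a b c : ℝ} (ha : 0 ≤ a) (hb : 0 ≤ b) (hc : 0 ≤ c) :
    (a * √b * c ^ ((1 : ℝ) / 4)) ^ ((4 : ℝ) / 3) =
      a ^ ((4 : ℝ) / 3) * b ^ ((2 : ℝ) / 3) * c ^ ((1 : ℝ) / 3) := by
  rw [Real.mul_rpow (by positivity) (by positivity), Real.mul_rpow ha (by positivity),
    Real.sqrt_eq_rpow, ← Real.rpow_mul hb, ← Real.rpow_mul hc]
  norm_num

theorem xlefourthrt_general {a b c d e f x : ℝ}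
    (ha : 0 ≤ a) (hb : 0 ≤ b) (hc : 0 ≤ c) (hd : 0 ≤ d)
    (hde : 0 ≤ b * √d + e) (hx : 0 ≤ x)
    (h : x ≤ a * √(b * √(c * x + d) + e) + f) :
    x ≤ a ^ ((4 : ℝ) / 3) * b ^ ((2 : ℝ) / 3) * c ^ ((1 : ℝ) / 3)
        + 4 / 3 * (a * √(b * √d + e) + f) := by
  have hquartic : x ≤ a * √b * c ^ ((1 : ℝ) / 4) * x ^ ((1 : ℝ) / 4)
      + (a * √(b * √d + e) + f) :=
    calc x ≤ a * √(b * √(c * x + d) + e) + f := h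
      _ ≤ a * (√b * (c * x) ^ ((1 : ℝ) / 4) + √(b * √d + e)) + f := by
          gcongr
          exact sqrt_mul_sqrt_add_add_le hb hd hde (mul_nonneg hc hx)
      _ = a * √b * c ^ ((1 : ℝ) / 4) * x ^ ((1 : ℝ) / 4) + (a * √(b * √d + e) + f) := by
          rw [Real.mul_rpow hc hx]
          ring
  have hbound := le_rpow_inv_add_inv_mul_of_le_mul_rpow_add (by positivity) hx (by norm_num)
    (by norm_num) hquartic
  have hexponent : (1 - 1 / 4 : ℝ)⁻¹ = 4 / 3 := by norm_num
  rwa [hexponent, mul_sqrt_mul_rpow_rpow_four_thirds ha hb hc] at hbound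

/-- If `a, b, c, d, e, f` and `x` are non-negative real numbers such that
`x ≤ a * √(b * √(c * x + d) + e) + f`, then
`x ≤ 2^(7/3) * a^(4/3) * b^(2/3) * c^(1/3) + 2 * a * √(2 * b * √(2 * d) + 2 * e) + 2 * f`. -/
theorem xlefourthrt (a b c d e f x : ℝ)
    (ha : 0 ≤ a) (hb : 0 ≤ b) (hc : 0 ≤ c) (hd : 0 ≤ d) (he : 0 ≤ e) (hf : 0 ≤ f)
    (hx : 0 ≤ x)
    (h : x ≤ a * Real.sqrt (b * Real.sqrt (c * x + d) + e) + f) :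
    x ≤ (2 : ℝ) ^ ((7 : ℝ) / 3) * a ^ ((4 : ℝ) / 3) * b ^ ((2 : ℝ) / 3) * c ^ ((1 : ℝ) / 3)
        + 2 * a * Real.sqrt (2 * b * Real.sqrt (2 * d) + 2 * e) + 2 * f := by
  have hcoeff : 1 ≤ (2 : ℝ) ^ ((7 : ℝ) / 3) := Real.one_le_rpow one_le_two (by norm_num)
  have hsqrt : √(b * √d + e) ≤ √(2 * b * √(2 * d) + 2 * e) := by gcongr <;> linarith
  calc x ≤ a ^ ((4 : ℝ) / 3) * b ^ ((2 : ℝ) / 3) * c ^ ((1 : ℝ) / 3)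
        + 4 / 3 * (a * √(b * √d + e) + f) :=
        xlefourthrt_general ha hb hc hd (by positivity) hx h
    _ ≤ 2 ^ ((7 : ℝ) / 3) * (a ^ ((4 : ℝ) / 3) * b ^ ((2 : ℝ) / 3) * c ^ ((1 : ℝ) / 3))
        + 2 * (a * √(2 * b * √(2 * d) + 2 * e) + f) :=
        add_le_add (le_mul_of_one_le_left (by positivity) hcoeff) (by gcongr; norm_num)
    _ = _ := by ring
end
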